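/- Let n ≥ 1 and let M be the set of functions x : Y → Z_{2n+1} such that x((0,…,0)) = 0 and, for each e ∈ {f_0,…,f_n, g} and each 𝐮 ∈ Y all of whose coordinates lie in dom e, x(𝐮) ∈ dom e and x(e·𝐮) = e(x(𝐮)), where e·𝐮 denotes the coordinatewise action. Then: (a) every (a_1,…,a_{n+1}) ∈ B satisfies a_k ≠ 0 and |a_k| ≤ k for 1 ≤ k ≤ n, and B is closed under the coordinatewise operations ∧, ∨, ¬, →; (b) the map t given by t(x) = (x(𝐛_1), x(𝐛_2), …, x(𝐛_{n+1})) is a bijection from M onto B. -/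

import Mathlib

/-- Sugihara implication on the integers. -/
def SImp (a b : ℤ) : ℤ := if a ≤ b then max (-a) b else min (-a) b

/-- The universe of the Sugihara algebra `Z_{2n+1}`. -/
def Zodd (n : ℕ) : Set ℤ := {a : ℤ | -(n : ℤ) ≤ a ∧ a ≤ (n : ℤ)}

/-- The universe of the Sugihara algebra `Z_{2n}`. -/
def Zeven (n : ℕ) : Set ℤ := {a : ℤ | (-(n : ℤ) ≤ a ∧ a ≤ (n : ℤ)) ∧ a ≠ 0}

/-- The endomorphism `g` of `Z_{2n+1}`, as a total function on `ℤ`. -/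
def gOFun (a : ℤ) : ℤ := if 0 < a then a - 1 else if a < 0 then a + 1 else 0

/-- The underlying function of the partial endomorphism `f_i` of `Z_{2n+1}`. -/
def fOFun (i : ℕ) (a : ℤ) : ℤ :=
  if 2 ≤ i then
    (if a = (i : ℤ) - 1 then (i : ℤ) else if a = -((i : ℤ) - 1) then -(i : ℤ) else a)
  else a

/-- The domain of the partial endomorphism `f_i` of `Z_{2n+1}`. -/
def fODom (n i : ℕ) : Set ℤ := Zodd n \ {(i : ℤ), -(i : ℤ)}

/-- The maps `f_0, …, f_n, g` on `Z_{2n+1}`, as pairs (domain, function). -/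
def MapsOdd (n : ℕ) : Set (Set ℤ × (ℤ → ℤ)) :=
  {e | (∃ i : ℕ, i ≤ n ∧ e = (fODom n i, fOFun i)) ∨ e = (Zodd n, gOFun)}

/-- The test space `Y` for the odd case, as a set of `(n+1)`-tuples. -/
def YOdd (n : ℕ) : Set (Fin (n + 1) → ℤ) :=
  {u | (∀ i, u i ∈ Zodd n) ∧
    ∃ j : Fin (n + 1), 0 ≤ u j ∧ (∀ i, i ≤ j → u i = u j) ∧
      ∀ k l : Fin (n + 1), j ≤ k → k < l → u k < u l}

/-- The tuples `𝐛_1, …, 𝐛_{n+1}` in `Y` (odd case); here `1 ≤ k ≤ n+1`. -/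
def bOdd (n k : ℕ) : Fin (n + 1) → ℤ :=
  if k = n + 1 then fun p => ((p : ℕ) : ℤ)
  else fun p => max 1 (((p : ℕ) : ℤ) - ((n : ℤ) - (k : ℤ)))

/-- The admissibility algebra `B` for the odd case, as a set of `(n+1)`-tuples
(0-based index `k` corresponds to the 1-based coordinate `a_{k+1}`). -/
def BOdd (n : ℕ) : Set (Fin (n + 1) → ℤ) :=
  {a | ∃ j : ℕ, 1 ≤ j ∧ j ≤ n ∧ ∃ ε : ℤ, (ε = 1 ∨ ε = -1) ∧
    (∀ k : Fin (n + 1), (k : ℕ) < j → (a k = 1 ∨ a k = -1)) ∧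
    (∀ k : Fin (n + 1), j ≤ (k : ℕ) → (k : ℕ) < n →
      a k = ε * (((k : ℕ) : ℤ) - (j : ℤ) + 2)) ∧
    (if j < n then a (Fin.last n) = a ⟨n - 1, by omega⟩
      else (a (Fin.last n) = -1 ∨ a (Fin.last n) = 0 ∨ a (Fin.last n) = 1))}

/-- The set `M` of morphisms from `Y` to `Z_{2n+1}`: maps preserving the constant `0`-tuple
and the coordinatewise actions of `f_0, …, f_n, g`. -/
def MOdd (n : ℕ) : Set ({u : Fin (n + 1) → ℤ // u ∈ YOdd n} → ℤ) :=
  {x | (∀ u : {u : Fin (n + 1) → ℤ // u ∈ YOdd n}, x u ∈ Zodd n) ∧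
    (∀ u : {u : Fin (n + 1) → ℤ // u ∈ YOdd n}, u.1 = (fun _ => 0) → x u = 0) ∧
    ∀ e ∈ MapsOdd n, ∀ u v : {u : Fin (n + 1) → ℤ // u ∈ YOdd n},
      (∀ p, u.1 p ∈ e.1) → v.1 = (fun p => e.2 (u.1 p)) → x u ∈ e.1 ∧ x v = e.2 (x u)}

open Classical in
/-- The map `t`, sending `x ∈ M` to `(x(𝐛_1), …, x(𝐛_{n+1}))`. -/
noncomputable def tOdd (n : ℕ) (x : {u : Fin (n + 1) → ℤ // u ∈ YOdd n} → ℤ) :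
    Fin (n + 1) → ℤ :=
  fun k => if h : bOdd n ((k : ℕ) + 1) ∈ YOdd n then x ⟨bOdd n ((k : ℕ) + 1), h⟩ else 0

/-!
The tuples `𝐛_k` generate `Y` under `f_0, …, f_n, g`: a tuple with an entry `m ≥ 2` such that
`m - 1` is not an entry is `f_m` of a smaller tuple, and a tuple without such an entry is `𝐛_k` or
`g 𝐛_k` for some `k`. Hence a morphism is determined by its values at the `𝐛_k`.

If `x` is a morphism, then `|x(𝐮)|` is an entry of `𝐮`, because otherwise `f_i` with `i = |x(𝐮)|`
would be defined at `𝐮` but not at `x(𝐮)`. This bounds the values `a_k = x(𝐛_k)`, and the relations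
`g² 𝐛_{k+1} = g 𝐛_k` for `k < n` and `g 𝐛_{n+1} = g 𝐛_n` become equations between them. The bounds
and equations together define `B`, and they are preserved by the Sugihara operations because `g` is
an endomorphism.

Conversely, every `𝐮 ∈ Y` is `φ(𝐛_k)` for an increasing map `φ` and the `𝐛_k` with the same constant
initial block, and letting `x(𝐮)` be the odd extension of `φ` at `a_k` gives a morphism: the `f_i`
preserve the block, and `g` changes it only in passing from an entry pair `0, 1` to `0, 0`, where
the equations apply.
-/

lemma odd_gOFun : Function.Odd gOFun := by
  intro a
  unfold gOFun
  split_ifs <;> omega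

lemma odd_fOFun (i : ℕ) : Function.Odd (fOFun i) := by
  intro a
  unfold fOFun
  split_ifs <;> omega

lemma monotone_gOFun : Monotone gOFun := by
  intro a b hab
  unfold gOFun
  split_ifs <;> omega

lemma gOFun_SImp (a b : ℤ) : gOFun (SImp a b) = SImp (gOFun a) (gOFun b) := by
  unfold SImp gOFun
  split_ifs <;> omega

lemma gOFun_eq_gOFun_iff {s t : ℤ} (ht : t ≠ 0) :
    gOFun s = gOFun t ↔ (|t| = 1 ∧ |s| ≤ 1) ∨ (2 ≤ |t| ∧ s = t) := by
  unfold gOFun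
  grind

lemma gOFun_gOFun_eq_gOFun_iff {s t : ℤ} (hs : s ≠ 0) (ht : t ≠ 0) :
    gOFun (gOFun s) = gOFun t ↔ (|t| = 1 ∧ |s| ≤ 2) ∨ (2 ≤ |t| ∧ s = t + t.sign) := by
  unfold gOFun
  rcases ht.lt_or_gt with h | h
  · rw [Int.sign_eq_neg_one_of_neg h]
    grind
  · rw [Int.sign_eq_one_of_pos h]
    grind

lemma strictMonoOn_fOFun (i : ℕ) : StrictMonoOn (fOFun i) (Set.Ici 0 \ {(i : ℤ)}) := by
  rintro a ⟨ha, hai⟩ b ⟨hb, hbi⟩ hab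
  simp only [Set.mem_Ici, Set.mem_singleton_iff] at ha hai hb hbi
  unfold fOFun
  split_ifs <;> omega

lemma strictMonoOn_gOFun {s : Set ℤ} (hs : s ⊆ Set.Ici 0) (h01 : ¬(0 ∈ s ∧ 1 ∈ s)) :
    StrictMonoOn gOFun s := by
  intro a ha b hb hab
  have ha0 : 0 ≤ a := hs ha
  have hne : ¬(a = 0 ∧ b = 1) := by
    rintro ⟨rfl, rfl⟩
    exact h01 ⟨ha, hb⟩
  unfold gOFun
  split_ifs <;> omega

lemma map_sign_mul_of_odd {φ : ℤ → ℤ} (hφ : Function.Odd φ) (s z : ℤ) :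
    φ (s.sign * z) = s.sign * φ z := by
  rcases Int.sign_trichotomy s with h | h | h <;> simp [h, hφ.map_zero, hφ z]

lemma abs_SImp (s t : ℤ) : |SImp s t| = |s| ∨ |SImp s t| = |t| := by
  unfold SImp
  grind

/-- The recursive form of membership in `B`: bounds on the entries `a_1, …, a_n`, together with the
equations that `g² 𝐛_{k+1} = g 𝐛_k` and `g 𝐛_{n+1} = g 𝐛_n` impose on the values of a morphism at
the `𝐛_k`. Indices are 0-based, and `l = k + 1` is a hypothesis so that no index has to be cast. -/
structure IsAdmissible {n : ℕ} (a : Fin (n + 1) → ℤ) : Prop where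
  ne_zero : ∀ k : Fin (n + 1), (k : ℕ) < n → a k ≠ 0
  abs_le : ∀ k : Fin (n + 1), (k : ℕ) < n → |a k| ≤ ((k : ℕ) : ℤ) + 1
  gOFun_gOFun : ∀ k l : Fin (n + 1), (l : ℕ) = k + 1 → (l : ℕ) < n →
    gOFun (gOFun (a l)) = gOFun (a k)
  gOFun_last : ∀ k : Fin (n + 1), (k : ℕ) + 1 = n → gOFun (a (Fin.last n)) = gOFun (a k)

namespace IsAdmissible

variable {n : ℕ} {a b : Fin (n + 1) → ℤ}

lemma map₂ (ha : IsAdmissible a) (hb : IsAdmissible b) {op : ℤ → ℤ → ℤ}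
    (hg : ∀ s t, gOFun (op s t) = op (gOFun s) (gOFun t))
    (habs : ∀ s t, |op s t| = |s| ∨ |op s t| = |t|) :
    IsAdmissible fun k => op (a k) (b k) where
  ne_zero k hk := by
    rw [← abs_pos]
    rcases habs (a k) (b k) with h | h <;> rw [h, abs_pos]
    exacts [ha.ne_zero k hk, hb.ne_zero k hk]
  abs_le k hk := by
    rcases habs (a k) (b k) with h | h <;> rw [h]
    exacts [ha.abs_le k hk, hb.abs_le k hk]
  gOFun_gOFun k l hl hln := by
    simp only [hg, ha.gOFun_gOFun k l hl hln, hb.gOFun_gOFun k l hl hln]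
  gOFun_last k hk := by
    simp only [hg, ha.gOFun_last k hk, hb.gOFun_last k hk]

lemma eq_add_of_two_le_abs (ha : IsAdmissible a) {j k : Fin (n + 1)} (hj : 2 ≤ |a j|)
    (hjk : j ≤ k) (hk : (k : ℕ) < n) : a k = a j + (a j).sign * ((k : ℕ) - (j : ℕ) : ℤ) := by
  obtain ⟨k, hk'⟩ := k
  replace hjk : (j : ℕ) ≤ k := hjk
  induction k, hjk using Nat.le_induction with
  | base => simp
  | succ k hjk ih =>
    have hpred : a ⟨k, by omega⟩ = a j + (a j).sign * ((k : ℤ) - (j : ℕ)) :=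
      ih (by omega) (Nat.lt_of_succ_lt hk)
    have hrel := (gOFun_gOFun_eq_gOFun_iff (ha.ne_zero _ hk)
      (ha.ne_zero ⟨k, by omega⟩ (Nat.lt_of_succ_lt hk))).1 (ha.gOFun_gOFun _ _ rfl hk)
    have hsign : (a j).sign = 1 ∧ 0 < a j ∨ (a j).sign = -1 ∧ a j < 0 := by
      grind [Int.sign_eq_one_of_pos, Int.sign_eq_neg_one_of_neg]
    grind [Int.sign_eq_one_of_pos, Int.sign_eq_neg_one_of_neg]

lemma eq_of_two_le_abs_of_last (ha : IsAdmissible a) {k : Fin (n + 1)} (hk : (k : ℕ) + 1 = n)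
    (h2 : 2 ≤ |a k|) : a (Fin.last n) = a k := by
  have := (gOFun_eq_gOFun_iff (ha.ne_zero k (by omega))).1 (ha.gOFun_last k hk)
  grind

lemma abs_last_le (ha : IsAdmissible a) (hn : 1 ≤ n) : |a (Fin.last n)| ≤ n := by
  have hk : ((⟨n - 1, by omega⟩ : Fin (n + 1)) : ℕ) + 1 = n := by simp only; omega
  have := (gOFun_eq_gOFun_iff (ha.ne_zero _ (by omega))).1 (ha.gOFun_last _ hk)
  have := ha.abs_le _ (show ((⟨n - 1, by omega⟩ : Fin (n + 1)) : ℕ) < n by omega)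
  grind

end IsAdmissible

section BOdd

variable {n : ℕ} {a : Fin (n + 1) → ℤ}

lemma isAdmissible_of_mem_BOdd (ha : a ∈ BOdd n) : IsAdmissible a := by
  obtain ⟨j, hj1, hjn, ε, hε, hhead, htail, hlast⟩ := ha
  refine ⟨fun k hk => ?_, fun k hk => ?_, fun k l hl hln => ?_, fun k hk => ?_⟩
  · grind
  · grind
  · have := hhead k
    have := hhead l
    have := htail k
    have := htail l
    unfold gOFun
    rcases hε with rfl | rfl <;> grind
  · have hk' : (⟨n - 1, by omega⟩ : Fin (n + 1)) = k := Fin.ext (by simp only; omega)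
    rw [hk'] at hlast
    have := hhead k
    split_ifs at hlast
    · rw [hlast]
    · unfold gOFun
      grind

lemma IsAdmissible.exists_eq_two_mul_sign (ha : IsAdmissible a)
    (hex : ∃ k : Fin (n + 1), (k : ℕ) < n ∧ 2 ≤ |a k|) :
    ∃ j : Fin (n + 1), 1 ≤ (j : ℕ) ∧ (j : ℕ) < n ∧ a j = 2 * (a j).sign ∧
      ∀ k < j, a k = 1 ∨ a k = -1 := by
  obtain ⟨j, ⟨hjn, hj2⟩, hmin⟩ := WellFounded.has_min wellFounded_lt _ hex
  have hhead : ∀ k < j, a k = 1 ∨ a k = -1 := by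
    intro k hk
    have hkn : (k : ℕ) < n := by omega
    have hk2 : ¬2 ≤ |a k| := fun h2 => hmin k ⟨hkn, h2⟩ hk
    grind [ha.ne_zero k hkn]
  have hj1 : 1 ≤ (j : ℕ) := by
    have := ha.abs_le j hjn
    grind
  refine ⟨j, hj1, hjn, ?_, hhead⟩
  obtain ⟨i, hij⟩ : ∃ i : Fin (n + 1), (j : ℕ) = i + 1 := ⟨⟨j - 1, by omega⟩, by simp only; omega⟩
  have hai : a i = 1 ∨ a i = -1 := hhead i (by omega)
  have habs : |a j| = 2 := by
    have := (gOFun_gOFun_eq_gOFun_iff (ha.ne_zero j hjn) (ha.ne_zero i (by omega))).1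
      (ha.gOFun_gOFun i j hij hjn)
    grind
  rw [← habs, mul_comm, Int.sign_mul_abs]

lemma IsAdmissible.mem_BOdd (hn : 1 ≤ n) (ha : IsAdmissible a) : a ∈ BOdd n := by
  have hpen : ((⟨n - 1, by omega⟩ : Fin (n + 1)) : ℕ) + 1 = n := by simp only; omega
  by_cases hex : ∃ k : Fin (n + 1), (k : ℕ) < n ∧ 2 ≤ |a k|
  · obtain ⟨j, hj1, hjn, hj, hhead⟩ := ha.exists_eq_two_mul_sign hex
    have hε : (a j).sign = 1 ∨ (a j).sign = -1 := by
      have := Int.sign_trichotomy (a j)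
      grind [ha.ne_zero j hjn, Int.sign_eq_zero_iff_zero]
    have hj2 : 2 ≤ |a j| := by grind
    have htail : ∀ k : Fin (n + 1), (j : ℕ) ≤ k → (k : ℕ) < n →
        a k = (a j).sign * (((k : ℕ) : ℤ) - (j : ℕ) + 2) := by
      intro k hjk hk
      linear_combination ha.eq_add_of_two_le_abs hj2 hjk hk + hj
    refine ⟨j, hj1, hjn.le, (a j).sign, hε, fun k => hhead k, htail, ?_⟩
    rw [if_pos hjn]
    refine ha.eq_of_two_le_abs_of_last hpen ?_
    rw [htail _ (by simp only; omega) (by simp only; omega)]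
    grind
  · have hhead : ∀ k : Fin (n + 1), (k : ℕ) < n → a k = 1 ∨ a k = -1 := by
      grind [ha.ne_zero]
    refine ⟨n, hn, le_rfl, 1, Or.inl rfl, hhead, fun k hk hk' => absurd hk hk'.not_ge, ?_⟩
    rw [if_neg (lt_irrefl n)]
    have := hhead ⟨n - 1, by omega⟩ (by grind)
    have := (gOFun_eq_gOFun_iff (by grind)).1 (ha.gOFun_last _ hpen)
    grind

lemma mem_BOdd_iff_isAdmissible (hn : 1 ≤ n) : a ∈ BOdd n ↔ IsAdmissible a :=
  ⟨isAdmissible_of_mem_BOdd, IsAdmissible.mem_BOdd hn⟩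

end BOdd

/-- The constant initial block of the tuple `u` ends at index `j`, and `u` increases strictly from
there on: the shape required of the elements of `Y`. -/
structure IsBlockEnd {m : ℕ} (u : Fin m → ℤ) (j : Fin m) : Prop where
  eq_of_le : ∀ i ≤ j, u i = u j
  strictMonoOn : StrictMonoOn u (Set.Ici j)

namespace IsBlockEnd

variable {m : ℕ} {u : Fin m → ℤ} {j k : Fin m}

lemma unique (hj : IsBlockEnd u j) (hk : IsBlockEnd u k) : j = k := by
  wlog hjk : j < k generalizing j k
  · rcases (not_lt.1 hjk).eq_or_lt with h | h
    exacts [h.symm, (this hk hj h).symm]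
  · have hlt : u j < u k := hj.strictMonoOn Set.self_mem_Ici hjk.le hjk
    exact absurd (hk.eq_of_le j hjk.le) hlt.ne

lemma monotone (h : IsBlockEnd u j) : Monotone u := by
  intro p q hpq
  rcases le_total j p with hp | hp
  · exact h.strictMonoOn.monotoneOn hp (hp.trans hpq) hpq
  · rw [h.eq_of_le p hp]
    rcases le_total j q with hq | hq
    exacts [h.strictMonoOn.monotoneOn Set.self_mem_Ici hq hq, (h.eq_of_le q hq).ge]

lemma apply_le (h : IsBlockEnd u j) (p : Fin m) : u j ≤ u p := by
  rcases le_total p j with hp | hp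
  exacts [(h.eq_of_le p hp).ge, h.monotone hp]

lemma comp (h : IsBlockEnd u j) {φ : ℤ → ℤ} (hφ : StrictMonoOn φ (Set.range u)) :
    IsBlockEnd (φ ∘ u) j where
  eq_of_le i hi := congrArg φ (h.eq_of_le i hi)
  strictMonoOn _ hp _ hq hpq := hφ ⟨_, rfl⟩ ⟨_, rfl⟩ (h.strictMonoOn hp hq hpq)

lemma sub_le_sub (h : IsBlockEnd u j) {p q : Fin m} (hjp : j ≤ p) (hpq : p ≤ q) :
    ((q : ℕ) : ℤ) - (p : ℕ) ≤ u q - u p := by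
  have hcard : (Finset.Icc p q).card ≤ (Finset.Icc (u p) (u q)).card := by
    refine Finset.card_le_card_of_injOn u (fun i hi => ?_) (fun i hi i' hi' => ?_)
    · simp only [Finset.coe_Icc, Set.mem_Icc] at hi ⊢
      exact ⟨h.monotone hi.1, h.monotone hi.2⟩
    · simp only [Finset.coe_Icc, Set.mem_Icc] at hi hi'
      exact h.strictMonoOn.injOn (hjp.trans hi.1) (hjp.trans hi'.1)
  rw [Fin.card_Icc, Int.card_Icc] at hcard
  have := h.monotone hpq
  omega

lemma gOFun_comp_or_exists_succ (h : IsBlockEnd u j) (hu : ∀ p, 0 ≤ u p) :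
    IsBlockEnd (gOFun ∘ u) j ∨
      ∃ k : Fin m, (k : ℕ) = j + 1 ∧ u j = 0 ∧ u k = 1 ∧ IsBlockEnd (gOFun ∘ u) k := by
  by_cases h01 : 0 ∈ Set.range u ∧ 1 ∈ Set.range u
  · obtain ⟨⟨p, hp⟩, k, hk⟩ := h01
    have hj : u j = 0 := le_antisymm (hp ▸ h.apply_le p) (hu j)
    have hjk : j < k := by
      by_contra hkj
      have := h.eq_of_le k (not_lt.1 hkj)
      omega
    have hkj : (k : ℕ) = j + 1 := by
      have := h.sub_le_sub le_rfl hjk.le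
      omega
    refine Or.inr ⟨k, hkj, hj, hk, fun i hi => ?_, fun p hp q hq hpq => ?_⟩
    · have := hu i
      have := h.monotone hi
      simp only [Function.comp_apply, gOFun]
      grind
    · have : u p < u q := h.strictMonoOn (hjk.le.trans hp) (hjk.le.trans hq) hpq
      have : u k ≤ u p := h.monotone hp
      simp only [Function.comp_apply, gOFun]
      grind
  · refine Or.inl (h.comp (strictMonoOn_gOFun ?_ h01))
    rintro _ ⟨p, rfl⟩
    exact hu p

end IsBlockEnd

section YOdd

variable {n : ℕ} {u : Fin (n + 1) → ℤ} {j : Fin (n + 1)}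

lemma mem_YOdd_iff :
    u ∈ YOdd n ↔ (∀ p, 0 ≤ u p ∧ u p ≤ n) ∧ ∃ j, IsBlockEnd u j := by
  constructor
  · rintro ⟨hu, j, h0, heq, hlt⟩
    have h : IsBlockEnd u j := ⟨heq, fun k hk l _ hkl => hlt k l hk hkl⟩
    exact ⟨fun p => ⟨h0.trans (h.apply_le p), (hu p).2⟩, j, h⟩
  · rintro ⟨hu, j, h⟩
    exact ⟨fun p => ⟨by linarith [(hu p).1, (hu p).2], (hu p).2⟩, j, (hu j).1, h.eq_of_le,
      fun k l hk hkl => h.strictMonoOn hk (hk.trans hkl.le) hkl⟩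

lemma IsBlockEnd.apply_eq_of_zero (h : IsBlockEnd u 0) (hu : ∀ p, 0 ≤ u p ∧ u p ≤ n)
    (p : Fin (n + 1)) : u p = (p : ℕ) := by
  have hlow := h.sub_le_sub le_rfl (Fin.zero_le p)
  have hhigh := h.sub_le_sub (Fin.zero_le p) (Fin.le_last p)
  have := hu 0
  have := hu (Fin.last n)
  simp only [Fin.val_zero, Fin.val_last] at hlow hhigh
  omega

lemma apply_mem_fODom_iff (hu : u ∈ YOdd n) {i : ℕ} (p : Fin (n + 1)) :
    u p ∈ fODom n i ↔ u p ≠ i := by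
  have := (mem_YOdd_iff.1 hu).1 p
  simp only [fODom, Zodd, Set.mem_sdiff, Set.mem_ofPred_eq, Set.mem_insert_iff,
    Set.mem_singleton_iff]
  omega

lemma strictMonoOn_fOFun_range (hu : u ∈ YOdd n) {i : ℕ} (hi : ∀ p, u p ≠ i) :
    StrictMonoOn (fOFun i) (Set.range u) := by
  refine (strictMonoOn_fOFun i).mono ?_
  rintro _ ⟨p, rfl⟩
  exact ⟨((mem_YOdd_iff.1 hu).1 p).1, hi p⟩

lemma fOFun_comp_mem_YOdd (hu : u ∈ YOdd n) {i : ℕ} (hin : i ≤ n) (hi : ∀ p, u p ≠ i) :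
    fOFun i ∘ u ∈ YOdd n := by
  obtain ⟨hbd, j, h⟩ := mem_YOdd_iff.1 hu
  refine mem_YOdd_iff.2 ⟨fun p => ?_, j, h.comp (strictMonoOn_fOFun_range hu hi)⟩
  have := hbd p
  simp only [Function.comp_apply, fOFun]
  split_ifs <;> omega

lemma gOFun_comp_mem_YOdd (hu : u ∈ YOdd n) : gOFun ∘ u ∈ YOdd n := by
  obtain ⟨hbd, j, h⟩ := mem_YOdd_iff.1 hu
  refine mem_YOdd_iff.2 ⟨fun p => ?_, ?_⟩
  · have := hbd p
    simp only [Function.comp_apply, gOFun]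
    split_ifs <;> omega
  · rcases h.gOFun_comp_or_exists_succ fun p => (hbd p).1 with h' | ⟨k, -, -, -, h'⟩
    exacts [⟨j, h'⟩, ⟨k, h'⟩]

end YOdd

/-- The tuple `(e, …, e, e + 1, e + 2, …)` whose constant block ends at index `j`. -/
def staircase {m : ℕ} (e : ℤ) (j : Fin m) (p : Fin m) : ℤ :=
  e + max 0 (((p : ℕ) : ℤ) - (j : ℕ))

lemma isBlockEnd_staircase {m : ℕ} (e : ℤ) (j : Fin m) : IsBlockEnd (staircase e j) j where
  eq_of_le i hi := by
    unfold staircase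
    omega
  strictMonoOn p hp q hq hpq := by
    simp only [Set.mem_Ici] at hp hq
    unfold staircase
    omega

lemma bOdd_succ {n : ℕ} (k : Fin (n + 1)) :
    bOdd n (k + 1) = staircase (if k = Fin.last n then 0 else 1) k.rev := by
  funext p
  have hlast : k = Fin.last n ↔ (k : ℕ) = n := by simp [Fin.ext_iff]
  unfold bOdd staircase
  simp only [hlast, Fin.val_rev]
  split_ifs <;> grind

lemma staircase_mem_YOdd {n : ℕ} {e : ℤ} {j : Fin (n + 1)} (h0 : 0 ≤ e) (hj : e ≤ (j : ℕ)) :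
    staircase e j ∈ YOdd n := by
  refine mem_YOdd_iff.2 ⟨fun p => ?_, j, isBlockEnd_staircase e j⟩
  unfold staircase
  omega

lemma gOFun_comp_staircase_one {m : ℕ} (j : Fin m) :
    gOFun ∘ staircase 1 j = staircase 0 j := by
  funext p
  simp only [Function.comp_apply, gOFun, staircase]
  split_ifs <;> omega

/-- The map undoing `fOFun m` on tuples of nonnegative integers that omit `m - 1`. -/
def lowerAt (m : ℕ) (a : ℤ) : ℤ := if a = m then (m : ℤ) - 1 else a

lemma strictMonoOn_lowerAt (m : ℕ) : StrictMonoOn (lowerAt m) {a | a ≠ (m : ℤ) - 1} := by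
  intro a ha b hb hab
  simp only [Set.mem_ofPred_eq] at ha hb
  unfold lowerAt
  split_ifs <;> omega

lemma lowerAt_ne (m : ℕ) (a : ℤ) : lowerAt m a ≠ m := by
  unfold lowerAt
  split_ifs <;> omega

lemma lowerAt_le (m : ℕ) (a : ℤ) : lowerAt m a ≤ a := by
  unfold lowerAt
  split_ifs <;> omega

lemma fOFun_lowerAt {m : ℕ} (hm : 2 ≤ m) {a : ℤ} (h0 : 0 ≤ a) (ha : a ≠ (m : ℤ) - 1) :
    fOFun m (lowerAt m a) = a := by
  unfold fOFun lowerAt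
  split_ifs <;> omega

section Gaps

variable {n : ℕ} {u : Fin (n + 1) → ℤ} {j : Fin (n + 1)}

lemma IsBlockEnd.staircase_le (h : IsBlockEnd u j) (p : Fin (n + 1)) :
    staircase (min 1 (u j)) j p ≤ u p := by
  unfold staircase
  rcases le_total p j with hp | hp
  · have := h.eq_of_le p hp
    omega
  · have := h.sub_le_sub le_rfl hp
    omega

lemma IsBlockEnd.exists_gap_of_ne_staircase (h : IsBlockEnd u j) (hu : 0 ≤ u j)
    (hne : u ≠ staircase (min 1 (u j)) j) :
    ∃ p, 2 ≤ u p ∧ ∀ q, u q ≠ u p - 1 := by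
  obtain ⟨p, hp, hmin⟩ := WellFounded.has_min wellFounded_lt
    {p | u p ≠ staircase (min 1 (u j)) j p} (Function.ne_iff.1 hne)
  have hlt := (h.staircase_le p).lt_of_ne' hp
  unfold staircase at hlt
  refine ⟨p, ?_, fun q hq => ?_⟩
  · have : p ≤ j → u p = u j := h.eq_of_le p
    omega
  · have hqp : q < p := by
      by_contra hpq
      have := h.monotone (not_lt.1 hpq)
      omega
    have huq : u q = staircase (min 1 (u j)) j q := by
      by_contra hq'
      exact hmin q hq' hqp
    unfold staircase at huq
    have : p ≤ j → u p = u j := h.eq_of_le p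
    have : q ≤ j → u q = u j := h.eq_of_le q
    omega

lemma exists_fOFun_comp_of_gap (hu : u ∈ YOdd n) {p : Fin (n + 1)} (h2 : 2 ≤ u p)
    (hgap : ∀ q, u q ≠ u p - 1) :
    ∃ m ≤ n, ∃ w ∈ YOdd n, (∀ q, w q ≠ m) ∧ u = fOFun m ∘ w ∧ ∑ q, w q < ∑ q, u q := by
  obtain ⟨hbd, j, h⟩ := mem_YOdd_iff.1 hu
  obtain ⟨m, hm⟩ := Int.eq_ofNat_of_zero_le (hbd p).1
  rw [hm] at h2 hgap
  have hmn : m ≤ n := by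
    have := hbd p
    omega
  refine ⟨m, hmn, lowerAt m ∘ u, mem_YOdd_iff.2 ⟨fun q => ?_, j, h.comp ?_⟩,
    fun q => lowerAt_ne m (u q), ?_, ?_⟩
  · have := hbd q
    simp only [Function.comp_apply, lowerAt]
    split_ifs <;> omega
  · refine (strictMonoOn_lowerAt m).mono ?_
    rintro _ ⟨q, rfl⟩
    exact hgap q
  · funext q
    exact (fOFun_lowerAt (by omega) (hbd q).1 (hgap q)).symm
  · refine Finset.sum_lt_sum (fun q _ => lowerAt_le m (u q)) ⟨p, Finset.mem_univ p, ?_⟩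
    exact (lowerAt_le m (u p)).lt_of_ne (hm ▸ lowerAt_ne m (u p))

end Gaps

/-- The points of the test space `Y`, on which morphisms are defined. -/
abbrev TestPoint (n : ℕ) := {u : Fin (n + 1) → ℤ // u ∈ YOdd n}

namespace TestPoint

variable {n : ℕ}

/-- The point `𝐛_{k+1}` of `Y`. -/
def generator (k : Fin (n + 1)) : TestPoint n :=
  ⟨bOdd n (k + 1), by
    rw [bOdd_succ]
    apply staircase_mem_YOdd <;> grind⟩

lemma generator_val (k : Fin (n + 1)) :
    (generator k).1 = staircase (if k = Fin.last n then 0 else 1) k.rev := bOdd_succ k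

/-- The total action of `g` on `Y`. -/
def contract (u : TestPoint n) : TestPoint n := ⟨gOFun ∘ u.1, gOFun_comp_mem_YOdd u.2⟩

lemma contract_contract_generator {k l : Fin (n + 1)} (hl : (l : ℕ) = k + 1) (hln : (l : ℕ) < n) :
    contract (contract (generator l)) = contract (generator k) := by
  have hk' : k ≠ Fin.last n := by grind
  have hl' : l ≠ Fin.last n := by grind
  apply Subtype.ext
  funext p
  simp only [contract, generator_val, if_neg hk', if_neg hl', Function.comp_apply, staircase,
    Fin.val_rev, gOFun]
  grind

lemma contract_generator_last {k : Fin (n + 1)} (hk : (k : ℕ) + 1 = n) :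
    contract (generator (Fin.last n)) = contract (generator k) := by
  have hk' : k ≠ Fin.last n := by grind
  apply Subtype.ext
  funext p
  simp only [contract, generator_val, if_neg hk', if_pos, Function.comp_apply, staircase,
    Fin.val_rev, gOFun, Fin.val_last]
  grind

lemma exists_generator_of_eq_staircase {u : TestPoint n} {j : Fin (n + 1)}
    (hu : u.1 = staircase (min 1 (u.1 j)) j) :
    ∃ k, u = generator k ∨ u = contract (generator k) := by
  have hbd := (mem_YOdd_iff.1 u.2).1
  have hlast : j.rev = Fin.last n ↔ j = 0 := by rw [Fin.rev_eq_iff, Fin.rev_last]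
  refine ⟨j.rev, ?_⟩
  rcases (hbd j).1.eq_or_lt with h0 | hpos
  · rw [← h0, min_eq_right zero_le_one] at hu
    by_cases hj : j = 0
    · left
      apply Subtype.ext
      rw [hu, generator_val, if_pos (hlast.2 hj), Fin.rev_rev]
    · right
      apply Subtype.ext
      change u.1 = gOFun ∘ (generator j.rev).1
      rw [hu, generator_val, if_neg (mt hlast.1 hj), Fin.rev_rev, gOFun_comp_staircase_one]
  · rw [min_eq_left (by omega)] at hu
    have hj : j ≠ 0 := by
      rintro rfl
      have hn := (hbd (Fin.last n)).2
      rw [hu, staircase, Fin.val_last, Fin.val_zero] at hn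
      omega
    left
    apply Subtype.ext
    rw [hu, generator_val, if_neg (mt hlast.1 hj), Fin.rev_rev]

theorem induction {P : TestPoint n → Prop} (gen : ∀ k, P (generator k))
    (map : ∀ e ∈ MapsOdd n, ∀ u v : TestPoint n, (∀ p, u.1 p ∈ e.1) →
      v.1 = (fun p => e.2 (u.1 p)) → P u → P v) (u : TestPoint n) : P u := by
  induction hN : (∑ p, u.1 p).toNat using Nat.strong_induction_on generalizing u with
  | _ N ih =>
    obtain ⟨hbd, j, h⟩ := mem_YOdd_iff.1 u.2
    by_cases hu : u.1 = staircase (min 1 (u.1 j)) j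
    · obtain ⟨k, rfl | rfl⟩ := exists_generator_of_eq_staircase hu
      · exact gen k
      · exact map _ (Or.inr rfl) (generator k) _ (generator k).2.1 rfl (gen k)
    · obtain ⟨p, hp2, hgap⟩ := h.exists_gap_of_ne_staircase (hbd j).1 hu
      obtain ⟨m, hm, w, hw, hwm, huw, hlt⟩ := exists_fOFun_comp_of_gap u.2 hp2 hgap
      have hw0 : 0 ≤ ∑ p, w p := Finset.sum_nonneg fun p _ => ((mem_YOdd_iff.1 hw).1 p).1
      exact map _ (Or.inl ⟨m, hm, rfl⟩) ⟨w, hw⟩ u (fun q => (apply_mem_fODom_iff hw q).2 (hwm q))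
        huw (ih (∑ p, w p).toNat (by omega) ⟨w, hw⟩ rfl)

end TestPoint

section Restriction

variable {n : ℕ} {x : TestPoint n → ℤ}

lemma tOdd_apply (x : TestPoint n → ℤ) (k : Fin (n + 1)) :
    tOdd n x k = x (TestPoint.generator k) :=
  dif_pos (TestPoint.generator k).2

lemma injOn_tOdd (n : ℕ) : Set.InjOn (tOdd n) (MOdd n) := by
  intro x hx y hy hxy
  funext u
  induction u using TestPoint.induction with
  | gen k => rw [← tOdd_apply x, ← tOdd_apply y, hxy]
  | map e he u v hu hv ih => rw [(hx.2.2 e he u v hu hv).2, (hy.2.2 e he u v hu hv).2, ih]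

lemma apply_contract (hx : x ∈ MOdd n) (u : TestPoint n) : x u.contract = gOFun (x u) :=
  (hx.2.2 _ (Or.inr rfl) u u.contract u.2.1 rfl).2

lemma exists_apply_eq_abs (hx : x ∈ MOdd n) (u : TestPoint n) : ∃ p, u.1 p = |x u| := by
  by_contra! hne
  rw [Int.abs_eq_natAbs] at hne
  have hin : (x u).natAbs ≤ n := by
    have := hx.1 u
    simp only [Zodd, Set.mem_ofPred_eq] at this
    omega
  have hmem : x u ∈ fODom n (x u).natAbs :=
    (hx.2.2 _ (Or.inl ⟨_, hin, rfl⟩) u ⟨_, fOFun_comp_mem_YOdd u.2 hin hne⟩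
      (fun p => (apply_mem_fODom_iff u.2 p).2 (hne p)) rfl).1
  exact hmem.2 (Int.natAbs_eq (x u))

lemma isAdmissible_tOdd (hx : x ∈ MOdd n) : IsAdmissible (tOdd n x) := by
  have habs : ∀ k : Fin (n + 1), (k : ℕ) < n →
      1 ≤ |tOdd n x k| ∧ |tOdd n x k| ≤ ((k : ℕ) : ℤ) + 1 := by
    intro k hk
    obtain ⟨p, hp⟩ := exists_apply_eq_abs hx (TestPoint.generator k)
    have hlast : k ≠ Fin.last n := by grind
    rw [tOdd_apply, ← hp, TestPoint.generator_val, if_neg hlast, staircase, Fin.val_rev]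
    grind
  refine ⟨fun k hk => abs_pos.1 (habs k hk).1, fun k hk => (habs k hk).2,
    fun k l hl hln => ?_, fun k hk => ?_⟩
  · simp only [tOdd_apply, ← apply_contract hx, TestPoint.contract_contract_generator hl hln]
  · simp only [tOdd_apply, ← apply_contract hx, TestPoint.contract_generator_last hk]

end Restriction

/-- The value at `u`, whose constant block ends at `j`, of the morphism with values `a` at the
generators. With `k` the generator whose block also ends at `j`, we have `u = φ ∘ 𝐛_k` for an
increasing map `φ`, and the value is the odd extension of `φ` at `a_k`: the entry of `u` at the
position where `𝐛_k` has the entry `|a_k|`, up to the sign of `a_k`. For `j = 0` the truncated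
`j - 1` gives the right position since `𝐛_{n+1}` starts with `0` instead of `1`. -/
def morphismValue {n : ℕ} (a u : Fin (n + 1) → ℤ) (j : Fin (n + 1)) : ℤ :=
  (a j.rev).sign * u (Fin.ofNat (n + 1) (j - 1 + (a j.rev).natAbs))

section Extension

variable {n : ℕ} {a u : Fin (n + 1) → ℤ} {j k : Fin (n + 1)}

lemma morphismValue_eq {p : Fin (n + 1)} (hp : (p : ℕ) = j - 1 + (a j.rev).natAbs) :
    morphismValue a u j = (a j.rev).sign * u p := by
  rw [morphismValue, ← hp, Fin.ofNat_val_eq_self]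

lemma morphismValue_comp {φ : ℤ → ℤ} (hφ : Function.Odd φ) :
    morphismValue a (φ ∘ u) j = φ (morphismValue a u j) :=
  (map_sign_mul_of_odd hφ _ _).symm

namespace IsAdmissible

lemma exists_position (ha : IsAdmissible a) (hn : 1 ≤ n) (j : Fin (n + 1)) :
    ∃ p : Fin (n + 1), (p : ℕ) = j - 1 + (a j.rev).natAbs := by
  refine ⟨⟨j - 1 + (a j.rev).natAbs, ?_⟩, rfl⟩
  rcases Fin.eq_zero_or_eq_succ j with rfl | ⟨i, rfl⟩
  · have := ha.abs_last_le hn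
    rw [Fin.rev_zero]
    grind
  · have hlt : ((i.succ.rev : Fin (n + 1)) : ℕ) < n := by grind
    have := ha.abs_le _ hlt
    grind

lemma morphismValue_staircase (ha : IsAdmissible a) (hn : 1 ≤ n) (k : Fin (n + 1)) :
    morphismValue a (staircase (if k = Fin.last n then 0 else 1) k.rev) k.rev = a k := by
  obtain ⟨p, hp⟩ := ha.exists_position hn k.rev
  have hp' : staircase (if k = Fin.last n then 0 else 1) k.rev p = (a k).natAbs := by
    have := ha.ne_zero k
    rw [Fin.rev_rev] at hp
    simp only [staircase, Fin.val_rev] at hp ⊢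
    grind
  rw [morphismValue_eq hp, hp', Fin.rev_rev, Int.sign_mul_natAbs]

lemma exists_apply_eq_abs_morphismValue (ha : IsAdmissible a) (hn : 1 ≤ n) (h : IsBlockEnd u j)
    (hu : ∀ p, 0 ≤ u p ∧ u p ≤ n) : ∃ p, u p = |morphismValue a u j| := by
  obtain ⟨p, hp⟩ := ha.exists_position hn j
  refine ⟨p, ?_⟩
  rw [morphismValue_eq hp, abs_mul, abs_of_nonneg (hu p).1]
  rcases eq_or_ne (a j.rev) 0 with h0 | h0
  · have hj : j = 0 := by
      by_contra hj
      exact ha.ne_zero j.rev (by grind) h0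
    subst hj
    have hp0 : (p : ℕ) = 0 := by rw [hp, h0]; rfl
    rw [h.apply_eq_of_zero hu, hp0, Nat.cast_zero, mul_zero]
  · rw [Int.abs_sign_of_ne_zero h0, one_mul]

lemma gOFun_morphismValue_one (ha : IsAdmissible a) (hn : 1 ≤ n) (h : IsBlockEnd u 0)
    (hu : ∀ p, 0 ≤ u p ∧ u p ≤ n) (hk : (k : ℕ) = 1) :
    gOFun (morphismValue a u k) = gOFun (morphismValue a u 0) := by
  have hval : ∀ j : Fin (n + 1), (j : ℕ) ≤ 1 → morphismValue a u j = a j.rev := by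
    intro j hj
    obtain ⟨p, hp⟩ := ha.exists_position hn j
    rw [morphismValue_eq hp, h.apply_eq_of_zero hu, hp, Nat.sub_eq_zero_of_le hj, Nat.zero_add,
      Int.sign_mul_natAbs]
  rw [hval k hk.le, hval 0 (by simp), Fin.rev_zero]
  exact (ha.gOFun_last k.rev (by grind)).symm

lemma gOFun_morphismValue_succ_of_pos (ha : IsAdmissible a) (hn : 1 ≤ n) (hj : 1 ≤ (j : ℕ))
    (hk : (k : ℕ) = j + 1) (huj : u j = 0) (huk : u k = 1) :
    gOFun (morphismValue a u k) = gOFun (morphismValue a u j) := by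
  have hs : a j.rev ≠ 0 := ha.ne_zero _ (by grind)
  have ht : a k.rev ≠ 0 := ha.ne_zero _ (by grind)
  obtain ⟨p, hp⟩ := ha.exists_position hn j
  obtain ⟨q, hq⟩ := ha.exists_position hn k
  rw [morphismValue_eq hp, morphismValue_eq hq, map_sign_mul_of_odd odd_gOFun,
    map_sign_mul_of_odd odd_gOFun]
  have hrel : gOFun (gOFun (a j.rev)) = gOFun (a k.rev) :=
    ha.gOFun_gOFun k.rev j.rev (by grind) (by grind)
  rcases (gOFun_gOFun_eq_gOFun_iff hs ht).1 hrel with ⟨ht1, hs2⟩ | ⟨ht2, hst⟩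
  · have hqk : q = k := by grind
    have hpjk : p = j ∨ p = k := by grind
    have hgj : gOFun (u j) = 0 := by simp [huj, gOFun]
    have hgk : gOFun (u k) = 0 := by simp [huk, gOFun]
    rcases hpjk with rfl | rfl <;> simp only [hqk, hgj, hgk, mul_zero]
  · have hsign : (a j.rev).sign = (a k.rev).sign ∧
        (a j.rev).natAbs = (a k.rev).natAbs + 1 := by
      grind [Int.sign_eq_one_of_pos, Int.sign_eq_neg_one_of_neg]
    have hpq : p = q := by grind
    rw [hsign.1, hpq]

lemma gOFun_morphismValue_succ (ha : IsAdmissible a) (hn : 1 ≤ n) (h : IsBlockEnd u j)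
    (hu : ∀ p, 0 ≤ u p ∧ u p ≤ n) (hk : (k : ℕ) = j + 1) (huj : u j = 0) (huk : u k = 1) :
    gOFun (morphismValue a u k) = gOFun (morphismValue a u j) := by
  rcases Nat.eq_zero_or_pos j with hj | hj
  · obtain rfl : j = 0 := Fin.ext hj
    exact ha.gOFun_morphismValue_one hn h hu hk
  · exact ha.gOFun_morphismValue_succ_of_pos hn hj hk huj huk

lemma morphismValue_gOFun_comp (ha : IsAdmissible a) (hn : 1 ≤ n) (h : IsBlockEnd u j)
    (hu : ∀ p, 0 ≤ u p ∧ u p ≤ n) (hk : IsBlockEnd (gOFun ∘ u) k) :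
    morphismValue a (gOFun ∘ u) k = gOFun (morphismValue a u j) := by
  rw [morphismValue_comp odd_gOFun]
  rcases h.gOFun_comp_or_exists_succ fun p => (hu p).1 with hj | ⟨i, hij, huj, hui, hi⟩
  · rw [hk.unique hj]
  · rw [hk.unique hi, ha.gOFun_morphismValue_succ hn h hu hij huj hui]

end IsAdmissible

namespace TestPoint

lemma exists_isBlockEnd (u : TestPoint n) : ∃ j, IsBlockEnd u.1 j := (mem_YOdd_iff.1 u.2).2

/-- The last index of the constant initial block of a point of `Y`. -/
noncomputable def blockEnd (u : TestPoint n) : Fin (n + 1) := u.exists_isBlockEnd.choose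

lemma isBlockEnd_blockEnd (u : TestPoint n) : IsBlockEnd u.1 u.blockEnd :=
  u.exists_isBlockEnd.choose_spec

end TestPoint

/-- The morphism from `Y` to `Z_{2n+1}` with values `a` at the generators. -/
noncomputable def morphismOf (a : Fin (n + 1) → ℤ) (u : TestPoint n) : ℤ :=
  morphismValue a u.1 u.blockEnd

lemma tOdd_morphismOf (hn : 1 ≤ n) (ha : IsAdmissible a) : tOdd n (morphismOf a) = a := by
  funext k
  have hend : (TestPoint.generator k).blockEnd = k.rev := by
    refine (TestPoint.generator k).isBlockEnd_blockEnd.unique ?_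
    rw [TestPoint.generator_val]
    exact isBlockEnd_staircase _ _
  rw [tOdd_apply, morphismOf, hend, TestPoint.generator_val, ha.morphismValue_staircase hn]

lemma exists_apply_eq_abs_morphismOf (hn : 1 ≤ n) (ha : IsAdmissible a) (u : TestPoint n) :
    ∃ p, u.1 p = |morphismOf a u| :=
  ha.exists_apply_eq_abs_morphismValue hn u.isBlockEnd_blockEnd (mem_YOdd_iff.1 u.2).1

lemma morphismOf_mem_Zodd (hn : 1 ≤ n) (ha : IsAdmissible a) (u : TestPoint n) :
    morphismOf a u ∈ Zodd n := by
  obtain ⟨p, hp⟩ := exists_apply_eq_abs_morphismOf hn ha u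
  exact abs_le.1 (hp ▸ (u.2.1 p).2)

lemma morphismOf_fOFun_comp {i : ℕ} {v w : TestPoint n} (hi : ∀ p, v.1 p ≠ i)
    (hw : w.1 = fOFun i ∘ v.1) : morphismOf a w = fOFun i (morphismOf a v) := by
  have hend : w.blockEnd = v.blockEnd := by
    refine w.isBlockEnd_blockEnd.unique ?_
    rw [hw]
    exact v.isBlockEnd_blockEnd.comp (strictMonoOn_fOFun_range v.2 hi)
  rw [morphismOf, hw, hend, morphismValue_comp (odd_fOFun i), morphismOf]

lemma morphismOf_mem_MOdd (hn : 1 ≤ n) (ha : IsAdmissible a) : morphismOf a ∈ MOdd n := by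
  refine ⟨morphismOf_mem_Zodd hn ha, fun u hu => ?_, ?_⟩
  · simp only [morphismOf, morphismValue, hu, mul_zero]
  · rintro _ (⟨i, -, rfl⟩ | rfl) (v : TestPoint n) (w : TestPoint n) hv hw
    · have hi : ∀ p, v.1 p ≠ i := fun p => (apply_mem_fODom_iff v.2 p).1 (hv p)
      refine ⟨⟨morphismOf_mem_Zodd hn ha v, fun hmem => ?_⟩, morphismOf_fOFun_comp hi hw⟩
      obtain ⟨p, hp⟩ := exists_apply_eq_abs_morphismOf hn ha v
      exact hi p (hp.trans ((abs_eq (Int.natCast_nonneg i)).2 hmem))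
    · refine ⟨morphismOf_mem_Zodd hn ha v, ?_⟩
      have hend : IsBlockEnd (gOFun ∘ v.1) w.blockEnd := by
        have := w.isBlockEnd_blockEnd
        rwa [hw] at this
      rw [morphismOf, hw]
      exact ha.morphismValue_gOFun_comp hn v.isBlockEnd_blockEnd (mem_YOdd_iff.1 v.2).1 hend

end Extension

theorem stmt16 (n : ℕ) (hn : 1 ≤ n) :
    (∀ a ∈ BOdd n, ∀ k : Fin (n + 1), (k : ℕ) < n →
      a k ≠ 0 ∧ |a k| ≤ ((k : ℕ) : ℤ) + 1) ∧
    (∀ a ∈ BOdd n, ∀ b ∈ BOdd n,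
      (fun k => min (a k) (b k)) ∈ BOdd n ∧ (fun k => max (a k) (b k)) ∈ BOdd n ∧
      (fun k => -a k) ∈ BOdd n ∧ (fun k => SImp (a k) (b k)) ∈ BOdd n) ∧
    Set.BijOn (tOdd n) (MOdd n) (BOdd n) := by
  refine ⟨fun a ha k hk => ?_, fun a ha b hb => ?_, fun x hx => ?_, injOn_tOdd n, fun a ha => ?_⟩
  · have ha' := isAdmissible_of_mem_BOdd ha
    exact ⟨ha'.ne_zero k hk, ha'.abs_le k hk⟩
  · rw [mem_BOdd_iff_isAdmissible hn] at ha hb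
    simp only [mem_BOdd_iff_isAdmissible hn]
    exact ⟨ha.map₂ hb (fun _ _ => monotone_gOFun.map_min) (by grind),
      ha.map₂ hb (fun _ _ => monotone_gOFun.map_max) (by grind),
      ha.map₂ ha (op := fun s _ => -s) (fun s _ => odd_gOFun s) (by simp),
      ha.map₂ hb gOFun_SImp abs_SImp⟩
  · exact (isAdmissible_tOdd hx).mem_BOdd hn
  · have ha' := isAdmissible_of_mem_BOdd ha
    exact ⟨morphismOf a, morphismOf_mem_MOdd hn ha', tOdd_morphismOf hn ha'⟩
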